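/- Let m ≥ 1, r ≥ 0, let (Q_0,P_0), …, (Q_r,P_r) be r+1 pairs of m×m matrices of independent commuting indeterminates, and set A_k := Σ_{i=0}^{r−k} Q_i P_{i+k} for 0 ≤ k ≤ r. For 1 ≤ s ≤ r define I_s := Σ_{0 ≤ j,l ≤ r, j+l = r+s−1} Tr(A_j A_l). Then I_s is a Casimir of the Takiff–algebra Poisson structure: with respect to the canonical Poisson bracket, {(A_i)_{ab}, I_s} = 0 for all 0 ≤ i ≤ r, all 1 ≤ a,b ≤ m, and all 1 ≤ s ≤ r. (I_s is the residue at z = 0 of z^{r+s}·Tr A(z)^2 for A(z) = Σ_{k=0}^{r} A_k z^{−k−1}.) -/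

import Mathlib

/-!
The quadratic spectral invariants `I_s = Σ_{j+l = r+s−1} Tr(A_j A_l)` are Casimirs of the
Takiff-algebra Poisson structure.
-/

open MvPolynomial

noncomputable section

/-- Index type for the entries of `N` pairs of `m × m` matrices of indeterminates. -/
abbrev Idx (N m : ℕ) := Fin N × Bool × Fin m × Fin m

/-- The matrix `Q_α` of indeterminates. -/
def Qm (N m : ℕ) (α : Fin N) : Matrix (Fin m) (Fin m) (MvPolynomial (Idx N m) ℂ) :=
  Matrix.of fun i j => X (α, false, i, j)

/-- The matrix `P_α` of indeterminates. -/
def Pm (N m : ℕ) (α : Fin N) : Matrix (Fin m) (Fin m) (MvPolynomial (Idx N m) ℂ) :=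
  Matrix.of fun i j => X (α, true, i, j)

/-- The canonical Poisson bracket. -/
def pois {N m : ℕ} (f g : MvPolynomial (Idx N m) ℂ) : MvPolynomial (Idx N m) ℂ :=
  ∑ α : Fin N, ∑ i : Fin m, ∑ j : Fin m,
    (pderiv (α, true, i, j) f * pderiv (α, false, j, i) g
      - pderiv (α, true, i, j) g * pderiv (α, false, j, i) f)

/-- The Takiff parametrisation `A_k := Σ_{i=0}^{r−k} Q_i P_{i+k}` (given `r+1` pairs). -/
def Amat (m r : ℕ) (k : ℕ) : Matrix (Fin m) (Fin m) (MvPolynomial (Idx (r+1) m) ℂ) :=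
  ∑ i : Fin (r+1), ∑ j : Fin (r+1),
    if (j : ℕ) = (i : ℕ) + k then Qm (r+1) m i * Pm (r+1) m j else 0

/-- The quadratic Casimir `I_s := Σ_{0 ≤ j,l ≤ r, j+l = r+s−1} Tr(A_j A_l)`
(stated here avoiding natural subtraction via `j + l + 1 = r + s`). -/
def Icas (m r : ℕ) (s : ℕ) : MvPolynomial (Idx (r+1) m) ℂ :=
  ∑ j ∈ Finset.range (r+1), ∑ l ∈ Finset.range (r+1),
    if j + l + 1 = r + s then (Amat m r j * Amat m r l).trace else 0

end

theorem sum_ite_const {ι M : Type*} [AddCommMonoid M] (c : Prop) [Decidable c] (t : Finset ι)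
    (f : ι → M) : (∑ x ∈ t, if c then f x else 0) = if c then ∑ x ∈ t, f x else 0 := by
  split_ifs <;> simp

theorem pois_add' {N m : ℕ} (f g h : MvPolynomial (Idx N m) ℂ) :
    pois f (g + h) = pois f g + pois f h := by
  simp only [pois, ← Finset.sum_add_distrib, map_add]
  refine Finset.sum_congr rfl fun _ _ => Finset.sum_congr rfl fun _ _ =>
    Finset.sum_congr rfl fun _ _ => ?_
  ring

theorem pois_zero' {N m : ℕ} (f : MvPolynomial (Idx N m) ℂ) : pois f 0 = 0 := by
  simp [pois]

theorem pois_sum' {N m : ℕ} {ι : Type*} (f : MvPolynomial (Idx N m) ℂ) (t : Finset ι)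
    (g : ι → MvPolynomial (Idx N m) ℂ) :
    pois f (∑ x ∈ t, g x) = ∑ x ∈ t, pois f (g x) := by
  classical
  induction t using Finset.induction_on with
  | empty => simp [pois_zero']
  | insert x t hx ih => rw [Finset.sum_insert hx, Finset.sum_insert hx, pois_add', ih]

theorem pois_mul' {N m : ℕ} (f g h : MvPolynomial (Idx N m) ℂ) :
    pois f (g * h) = pois f g * h + g * pois f h := by
  simp only [pois, Finset.sum_mul, Finset.mul_sum, ← Finset.sum_add_distrib, Derivation.leibniz,
    smul_eq_mul]
  refine Finset.sum_congr rfl fun _ _ => Finset.sum_congr rfl fun _ _ =>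
    Finset.sum_congr rfl fun _ _ => ?_
  ring

theorem Amat_apply (m r k : ℕ) (a b : Fin m) :
    Amat m r k a b = ∑ u : Fin (r+1), ∑ v : Fin (r+1), if (v : ℕ) = u + k then
      ∑ p : Fin m, (X (u, false, a, p) * X (v, true, p, b) : MvPolynomial (Idx (r+1) m) ℂ)
      else 0 := by
  simp only [Amat, Matrix.sum_apply]
  refine Finset.sum_congr rfl fun _ _ => Finset.sum_congr rfl fun _ _ => ?_
  split_ifs
  · simp [Matrix.mul_apply, Qm, Pm]
  · rfl

theorem pderivP (m r k : ℕ) (a b p q : Fin m) (α : Fin (r+1)) :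
    pderiv (α, true, p, q) (Amat m r k a b) =
      if q = b then ∑ u : Fin (r+1), if (α : ℕ) = u + k then X (u, false, a, p) else 0 else 0 := by
  rw [Amat_apply, map_sum]
  rw [← sum_ite_const]
  refine Finset.sum_congr rfl fun u _ => ?_
  rw [map_sum, Finset.sum_eq_single α]
  · by_cases h : (α : ℕ) = u + k
    · simp only [h, if_true, map_sum, Derivation.leibniz, pderiv_X, smul_eq_mul]
      rw [Finset.sum_eq_single p]
      · by_cases hq : q = b
        · subst hq; simp [Pi.single_apply]
        · simp [Pi.single_apply, hq, Ne.symm hq, eq_comm]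
      · intro x _ hx
        simp [Pi.single_apply, hx, Ne.symm hx]
      · simp
    · simp [h]
  · intro v _ hv
    split_ifs
    · simp [Derivation.leibniz, pderiv_X, Pi.single_apply, hv, Ne.symm hv]
    · simp
  · simp

theorem pderivQ (m r k : ℕ) (c d p q : Fin m) (α : Fin (r+1)) :
    pderiv (α, false, q, p) (Amat m r k c d) =
      if q = c then ∑ v : Fin (r+1), if (v : ℕ) = α + k then X (v, true, p, d) else 0 else 0 := by
  rw [Amat_apply, Finset.sum_comm, map_sum]
  rw [← sum_ite_const]
  refine Finset.sum_congr rfl fun v _ => ?_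
  rw [map_sum, Finset.sum_eq_single α]
  · by_cases h : (v : ℕ) = α + k
    · simp only [h, if_true, map_sum, Derivation.leibniz, pderiv_X, smul_eq_mul]
      rw [Finset.sum_eq_single p]
      · by_cases hq : q = c
        · subst hq; simp [Pi.single_apply]
        · simp [Pi.single_apply, hq, Ne.symm hq, eq_comm]
      · intro x _ hx
        simp [Pi.single_apply, hx, Ne.symm hx]
      · simp
    · simp [h]
  · intro u _ hv
    split_ifs
    · simp [Derivation.leibniz, pderiv_X, Pi.single_apply, hv, Ne.symm hv]
    · simp
  · simp

theorem key (m r i j : ℕ) (a d : Fin m) :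
    ∑ α : Fin (r+1), ∑ p : Fin m,
      (∑ u : Fin (r+1), if (α : ℕ) = u + i then
        (X (u, false, a, p) : MvPolynomial (Idx (r+1) m) ℂ) else 0) *
      (∑ v : Fin (r+1), if (v : ℕ) = α + j then X (v, true, p, d) else 0)
    = Amat m r (i + j) a d := by
  rw [Amat_apply]
  simp only [Finset.sum_mul_sum]
  have h1 : ∀ α : Fin (r+1), ∀ g : Fin m → Fin (r+1) → Fin (r+1) → MvPolynomial (Idx (r+1) m) ℂ,
      ∑ p, ∑ u, ∑ v, g p u v = ∑ u, ∑ v, ∑ p, g p u v := by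
    intro _ g
    rw [Finset.sum_comm]
    exact Finset.sum_congr rfl fun _ _ => Finset.sum_comm
  rw [Finset.sum_congr rfl fun α _ => h1 α _, Finset.sum_comm]
  refine Finset.sum_congr rfl fun u _ => ?_
  rw [Finset.sum_comm]
  refine Finset.sum_congr rfl fun v _ => ?_
  split_ifs with h
  · have hv := v.2
    rw [Finset.sum_eq_single (⟨u + i, by omega⟩ : Fin (r+1))]
    · refine Finset.sum_congr rfl fun p _ => ?_
      rw [if_pos rfl, if_pos (by simp; omega)]
    · intro α _ hα
      have : ¬ ((α : ℕ) = u + i) := fun h' => hα (Fin.ext h')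
      simp [this]
    · simp
  · refine Finset.sum_eq_zero fun α _ => Finset.sum_eq_zero fun p _ => ?_
    by_cases h2 : (α : ℕ) = u + i
    · rw [if_neg (show ¬ (v : ℕ) = α + j by omega), mul_zero]
    · rw [if_neg h2, zero_mul]

theorem bracketA (m r i j : ℕ) (a b c d : Fin m) :
    pois (Amat m r i a b) (Amat m r j c d) =
      (if b = c then Amat m r (i + j) a d else 0) -
      (if d = a then Amat m r (i + j) c b else 0) := by
  rw [← key m r i j a d, Nat.add_comm i j, ← key m r j i c b]
  simp only [pois, pderivP, pderivQ, Finset.sum_sub_distrib]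
  congr 1
  · rw [← sum_ite_const]
    refine Finset.sum_congr rfl fun α _ => ?_
    rw [← sum_ite_const]
    refine Finset.sum_congr rfl fun p _ => ?_
    rw [Finset.sum_eq_single b]
    · simp
    · intro q _ hq
      simp [hq]
    · simp
  · rw [← sum_ite_const]
    refine Finset.sum_congr rfl fun α _ => ?_
    rw [← sum_ite_const]
    refine Finset.sum_congr rfl fun p _ => ?_
    rw [Finset.sum_eq_single d]
    · simp
    · intro q _ hq
      simp [hq]
    · simp

theorem Amat_big (m r k : ℕ) (h : r < k) : Amat m r k = 0 := by
  unfold Amat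
  refine Finset.sum_eq_zero fun u _ => Finset.sum_eq_zero fun v _ => ?_
  have := v.2
  rw [if_neg (by omega)]

theorem bracketTr (m r i j l : ℕ) (a b : Fin m) :
    pois (Amat m r i a b) (Amat m r j * Amat m r l).trace =
      (Amat m r (i+j) * Amat m r l - Amat m r l * Amat m r (i+j)) a b +
      (Amat m r (i+l) * Amat m r j - Amat m r j * Amat m r (i+l)) a b := by
  simp only [Matrix.trace, Matrix.diag, Matrix.mul_apply, pois_sum', pois_mul', bracketA,
    Matrix.sub_apply, Finset.sum_add_distrib, sub_mul, mul_sub, Finset.sum_sub_distrib,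
    ite_mul, mul_ite, zero_mul, mul_zero]
  simp only [sum_ite_const, Finset.sum_ite_eq, Finset.sum_ite_eq',
    Finset.mem_univ, if_true]
  simp only [mul_comm]

theorem sumF {R : Type*} [CommRing R] [CharZero R] [NoZeroDivisors R] (r s i : ℕ) (hs : 1 ≤ s)
    (F : ℕ → ℕ → R) (hF : ∀ x y, F x y = - F y x) (h0 : ∀ x y, r < x → F x y = 0) :
    ∑ j ∈ Finset.range (r+1), ∑ l ∈ Finset.range (r+1),
      (if j + l + 1 = r + s then F (i + j) l else 0) = 0 := by
  have h1 : ∑ j ∈ Finset.range (r+1), ∑ l ∈ Finset.range (r+1),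
      (if j + l + 1 = r + s then F (i + j) l else 0) =
      ∑ l ∈ Finset.range (r+1), ∑ x ∈ Finset.range (r+1),
        (if x + l + 1 = r + s + i then F x l else 0) := by
    rw [Finset.sum_comm]
    refine Finset.sum_congr rfl fun l hl => ?_
    rw [Finset.mem_range] at hl
    rw [Finset.sum_eq_single (r + s - 1 - l), if_pos (by omega)]
    · by_cases hx : i + (r + s - 1 - l) ≤ r
      · rw [Finset.sum_eq_single (i + (r + s - 1 - l)), if_pos (by omega)]
        · intro x _ hx; rw [if_neg (by omega)]
        · intro h; rw [Finset.mem_range] at h; omega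
      · rw [h0 _ _ (by omega)]
        symm
        refine Finset.sum_eq_zero fun x hx => ?_
        rw [Finset.mem_range] at hx
        rw [if_neg (by omega)]
    · intro x _ hx; rw [if_neg (by omega)]
    · intro h; rw [Finset.mem_range] at h
      rw [if_pos (by omega), h0 _ _ (by omega)]
  rw [h1]
  rw [← self_eq_neg]
  conv_lhs => rw [Finset.sum_comm]
  simp only [← Finset.sum_neg_distrib]
  refine Finset.sum_congr rfl fun x _ => Finset.sum_congr rfl fun y _ => ?_
  rw [show x + y + 1 = y + x + 1 by omega]
  split_ifs
  · exact hF _ _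
  · simp

/-- for `1 ≤ s ≤ r` the spectral invariant `I_s` is a Casimir:
`{(A_i)_{ab}, I_s} = 0` for all `0 ≤ i ≤ r` and all matrix indices `a, b`. -/
theorem statement3 (m r : ℕ) (hm : 1 ≤ m) (s : ℕ) (hs1 : 1 ≤ s) (hsr : s ≤ r)
    (i : ℕ) (hi : i ≤ r) (a b : Fin m) :
    pois ((Amat m r i) a b) (Icas m r s) = 0 := by
  have H := sumF r s i hs1
    (fun x y => (Amat m r x * Amat m r y - Amat m r y * Amat m r x) a b)
    (fun x y => by simp) (fun x y h => by simp [Amat_big m r x h])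
  have H2 := H
  rw [Finset.sum_comm] at H2
  have h3 : pois (Amat m r i a b) (Icas m r s) = 0 + 0 := by
    refine Eq.trans ?_ (congrArg₂ (· + ·) H H2)
    simp only [Icas, pois_sum', ← Finset.sum_add_distrib]
    refine Finset.sum_congr rfl fun j _ => Finset.sum_congr rfl fun l _ => ?_
    rw [show l + j + 1 = j + l + 1 by omega]
    split_ifs
    · exact bracketTr m r i j l a b
    · simp [pois_zero']
  rw [h3, add_zero]
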